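/- Fix ρ > 0 and let (γ_n) be a sequence of positive reals with γ_n/n → ρ as n → ∞. Define T_n = (1/κ_n)·(n·κ_n/(γ_n·κ_{n-1}))ⁿ. Then (1/n)·ln T_n → −ln ρ − 1/2 as n → ∞; consequently T_n → 0 if ρ > 1/√e, and T_n → ∞ if ρ < 1/√e. -/

import Mathlib

/-!
Write `g n = log Γ(n/2 + 1)` and `d n = g n - g (n - 1)`. The powers of `π` in `T n` cancel, and
`(1/n) log (T n) = g n / n - d n - log (γ n / n)` exactly, for `n ≥ 1`.

Log-convexity of `Γ` and the functional equation give
`log (n/2) ≤ 2 d n ≤ log (n/2 + 1/2)`, so `d n = (1/2) log (n/2) + o(1)`.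
Legendre's duplication formula gives `g n + g (n - 1) = log n! - n log 2 + (1/2) log π`, hence
`2 g n = d n + log n! - n log 2 + (1/2) log π`. With Stirling's formula in the weak form
`log n! / n - log n → -1`, it follows that `g n / n - d n → -1/2`.

The threshold statements hold because `log (T n)` is `n` times a sequence with limit
`-log ρ - 1/2`, which is negative if `ρ > 1/√e` and positive if `ρ < 1/√e`.
-/

open Filter Real

/-- `κ n`, the volume of the unit ball in `ℝⁿ`. -/
noncomputable def kappa (n : ℕ) : ℝ := Real.pi ^ ((n : ℝ) / 2) / Real.Gamma ((n : ℝ) / 2 + 1)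

/-- The increment `log Γ(n/2 + 1) - log Γ((n-1)/2 + 1)`; the subtraction is carried
out in `ℝ`, so nothing is truncated at `n = 0`. -/
noncomputable def gammaStep (n : ℕ) : ℝ :=
  log (Gamma ((n : ℝ) / 2 + 1)) - log (Gamma ((n : ℝ) / 2 + 1 / 2))

lemma two_mul_log_Gamma_midpoint_le {x : ℝ} (hx : 0 < x) :
    2 * log (Gamma (x + 1 / 2)) ≤ log (Gamma x) + log (Gamma (x + 1)) := by
  have hx1 : 0 < x + 1 := by linarith
  have h := convexOn_log_Gamma.2 (Set.mem_Ioi.2 hx) (Set.mem_Ioi.2 hx1)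
    (show (0 : ℝ) ≤ 1 / 2 by norm_num) (show (0 : ℝ) ≤ 1 / 2 by norm_num) (by norm_num)
  simp only [smul_eq_mul, Function.comp_apply] at h
  rw [show 1 / 2 * x + 1 / 2 * (x + 1) = x + 1 / 2 by ring] at h
  linarith

lemma log_Gamma_add_one {x : ℝ} (hx : 0 < x) :
    log (Gamma (x + 1)) = log x + log (Gamma x) := by
  rw [Gamma_add_one hx.ne', log_mul hx.ne' (Gamma_pos_of_pos hx).ne']

lemma log_le_two_mul_gammaStep {n : ℕ} (hn : 0 < n) :
    log ((n : ℝ) / 2) ≤ 2 * gammaStep n := by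
  have hx : (0 : ℝ) < (n : ℝ) / 2 := by positivity
  have h1 := two_mul_log_Gamma_midpoint_le hx
  have h2 := log_Gamma_add_one hx
  unfold gammaStep
  linarith

lemma two_mul_gammaStep_le (n : ℕ) :
    2 * gammaStep n ≤ log ((n : ℝ) / 2 + 1 / 2) := by
  have hx : (0 : ℝ) < (n : ℝ) / 2 + 1 / 2 := by positivity
  have h1 := two_mul_log_Gamma_midpoint_le hx
  have h2 := log_Gamma_add_one hx
  rw [show (n : ℝ) / 2 + 1 / 2 + 1 / 2 = (n : ℝ) / 2 + 1 by ring] at h1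
  unfold gammaStep
  linarith

/-- Legendre's duplication formula at `(n + 1) / 2`, in logarithmic form. -/
lemma two_mul_log_Gamma_eq (n : ℕ) :
    2 * log (Gamma ((n : ℝ) / 2 + 1)) =
      gammaStep n + log (n.factorial : ℝ) - n * log 2 + log π / 2 := by
  have h := Real.Gamma_mul_Gamma_add_half ((n : ℝ) / 2 + 1 / 2)
  rw [show (n : ℝ) / 2 + 1 / 2 + 1 / 2 = (n : ℝ) / 2 + 1 by ring,
    show 2 * ((n : ℝ) / 2 + 1 / 2) = (n : ℝ) + 1 by ring, Gamma_nat_eq_factorial,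
    show 1 - ((n : ℝ) + 1) = -(n : ℝ) by ring] at h
  have h1 : Gamma ((n : ℝ) / 2 + 1 / 2) ≠ 0 := (Gamma_pos_of_pos (by positivity)).ne'
  have h2 : Gamma ((n : ℝ) / 2 + 1) ≠ 0 := (Gamma_pos_of_pos (by positivity)).ne'
  have hf : (n.factorial : ℝ) ≠ 0 := by positivity
  have h3 := congrArg log h
  rw [log_mul h1 h2, log_mul (by positivity) (by positivity), log_mul hf (by positivity),
    log_rpow (by norm_num), log_sqrt pi_pos.le] at h3
  unfold gammaStep
  linarith

lemma tendsto_gammaStep_sub :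
    Tendsto (fun n : ℕ => gammaStep n - log ((n : ℝ) / 2) / 2) atTop (nhds 0) := by
  have hlim : Tendsto (fun n : ℕ => log (1 + 1 / (n : ℝ)) / 2) atTop (nhds 0) := by
    have h1 : Tendsto (fun n : ℕ => 1 + 1 / (n : ℝ)) atTop (nhds 1) := by
      simpa using tendsto_one_div_atTop_nhds_zero_nat.const_add (1 : ℝ)
    simpa using (h1.log one_ne_zero).div_const 2
  refine tendsto_of_tendsto_of_tendsto_of_le_of_le' tendsto_const_nhds hlim ?_ ?_
  · filter_upwards [eventually_gt_atTop 0] with n hn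
    linarith [log_le_two_mul_gammaStep hn]
  · filter_upwards [eventually_gt_atTop 0] with n hn
    have hx : (0 : ℝ) < n := by exact_mod_cast hn
    have h := two_mul_gammaStep_le n
    rw [show (n : ℝ) / 2 + 1 / 2 = (n : ℝ) / 2 * (1 + 1 / (n : ℝ)) by field_simp,
      log_mul (by positivity) (by positivity)] at h
    linarith

lemma tendsto_log_nat_div :
    Tendsto (fun n : ℕ => log (n : ℝ) / n) atTop (nhds 0) :=
  (isLittleO_log_id_atTop.tendsto_div_nhds_zero).comp tendsto_natCast_atTop_atTop

lemma tendsto_log_factorial_div_sub :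
    Tendsto (fun n : ℕ => log (n.factorial : ℝ) / n - log n) atTop (nhds (-1)) := by
  have h1 : Tendsto (fun n : ℕ => log (Stirling.stirlingSeq n) * (1 / (n : ℝ))) atTop
      (nhds (log (√π) * 0)) :=
    (Stirling.tendsto_stirlingSeq_sqrt_pi.log (by positivity)).mul
      tendsto_one_div_atTop_nhds_zero_nat
  have h2 := tendsto_one_div_atTop_nhds_zero_nat (𝕜 := ℝ) |>.const_mul (log 2 / 2)
  have h3 := tendsto_log_nat_div.div_const 2
  have h := ((h1.add h2).add h3).sub_const 1
  simp only [mul_zero, zero_div, add_zero, zero_sub] at h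
  refine h.congr' ?_
  filter_upwards [eventually_gt_atTop 0] with n hn
  have hx : (0 : ℝ) < n := by exact_mod_cast hn
  rw [Stirling.log_stirlingSeq_formula, log_mul (by norm_num) hx.ne',
    log_div hx.ne' (exp_pos 1).ne', log_exp]
  field_simp
  ring

lemma tendsto_log_Gamma_div_sub_gammaStep :
    Tendsto (fun n : ℕ => log (Gamma ((n : ℝ) / 2 + 1)) / n - gammaStep n) atTop
      (nhds (-1 / 2)) := by
  have h0 := tendsto_one_div_atTop_nhds_zero_nat (𝕜 := ℝ)
  have h1 := tendsto_log_factorial_div_sub.div_const 2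
  have h2 := (tendsto_gammaStep_sub.mul h0).div_const 2
  have h3 := tendsto_log_nat_div.div_const 4
  have h4 := h0.const_mul ((log π - log 2) / 4)
  have h := (((h1.add h2).add h3).add h4).sub tendsto_gammaStep_sub
  simp only [mul_zero, zero_div, add_zero, sub_zero] at h
  refine h.congr' ?_
  filter_upwards [eventually_gt_atTop 0] with n hn
  have hx : (0 : ℝ) < n := by exact_mod_cast hn
  have hg : log (Gamma ((n : ℝ) / 2 + 1)) =
      (gammaStep n + log (n.factorial : ℝ) - n * log 2 + log π / 2) / 2 := by
    linarith [two_mul_log_Gamma_eq n]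
  rw [hg, log_div hx.ne' (by norm_num)]
  field_simp
  ring

lemma kappa_pos (n : ℕ) : 0 < kappa n :=
  div_pos (by positivity) (Gamma_pos_of_pos (by positivity))

lemma log_kappa (n : ℕ) :
    log (kappa n) = (n : ℝ) / 2 * log π - log (Gamma ((n : ℝ) / 2 + 1)) := by
  have h : Gamma ((n : ℝ) / 2 + 1) ≠ 0 := (Gamma_pos_of_pos (by positivity)).ne'
  rw [kappa, log_div (by positivity) h, log_rpow pi_pos]

lemma log_kappa_sub_log_kappa_pred {n : ℕ} (hn : 0 < n) :
    log (kappa n) - log (kappa (n - 1)) = log π / 2 - gammaStep n := by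
  rw [log_kappa, log_kappa, Nat.cast_pred hn, gammaStep,
    show ((n : ℝ) - 1) / 2 + 1 = (n : ℝ) / 2 + 1 / 2 by ring]
  ring

/-- Asymptotics and threshold for the expected volume of the typical cell
`T_n = (1/κ_n) (n κ_n / (γ_n κ_{n-1}))^n` when `γ_n ∼ ρ n`. -/
theorem typical_cell_volume_threshold (ρ : ℝ) (hρ : 0 < ρ)
    (γ : ℕ → ℝ) (hγpos : ∀ n, 0 < γ n)
    (hγ : Tendsto (fun n : ℕ => γ n / (n : ℝ)) atTop (nhds ρ))
    (T : ℕ → ℝ)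
    (hT : ∀ n : ℕ, T n =
      (1 / kappa n) * (((n : ℝ) * kappa n) / (γ n * kappa (n - 1))) ^ n) :
    Tendsto (fun n : ℕ => (1 / (n : ℝ)) * Real.log (T n)) atTop
      (nhds (-Real.log ρ - 1 / 2)) ∧
    (ρ > 1 / Real.sqrt (Real.exp 1) → Tendsto T atTop (nhds 0)) ∧
    (ρ < 1 / Real.sqrt (Real.exp 1) → Tendsto T atTop atTop) := by
  have hmain : Tendsto (fun n : ℕ => (1 / (n : ℝ)) * Real.log (T n)) atTop
      (nhds (-Real.log ρ - 1 / 2)) := by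
    have h := tendsto_log_Gamma_div_sub_gammaStep.sub (hγ.log hρ.ne')
    rw [show -1 / 2 - log ρ = -log ρ - 1 / 2 by ring] at h
    refine h.congr' ?_
    filter_upwards [eventually_gt_atTop 0] with n hn
    have hx : (0 : ℝ) < n := by exact_mod_cast hn
    have hk := kappa_pos n
    have hk' := kappa_pos (n - 1)
    have hg := hγpos n
    have hlog := log_kappa_sub_log_kappa_pred hn
    rw [hT, log_mul (by positivity) (by positivity), log_pow,
      log_div hg.ne' hx.ne', log_div (mul_pos hx hk).ne' (mul_pos hg hk').ne',
      log_mul hx.ne' hk.ne', log_mul hg.ne' hk'.ne', one_div (kappa n), log_inv,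
      show log (kappa (n - 1)) = log (kappa n) - log π / 2 + gammaStep n by linarith, log_kappa]
    field_simp
    ring
  have hTpos : ∀ᶠ n in atTop, 0 < T n := by
    filter_upwards [eventually_gt_atTop 0] with n hn
    have hx : (0 : ℝ) < n := by exact_mod_cast hn
    have hk := kappa_pos n
    have hk' := kappa_pos (n - 1)
    have hg := hγpos n
    rw [hT]
    positivity
  have hexp : (fun n : ℕ => exp ((n : ℝ) * ((1 / (n : ℝ)) * log (T n)))) =ᶠ[atTop] T := by
    filter_upwards [eventually_gt_atTop 0, hTpos] with n hn hTn
    have hx : (0 : ℝ) < n := by exact_mod_cast hn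
    rw [← mul_assoc, mul_one_div_cancel hx.ne', one_mul, exp_log hTn]
  have hcrit : log (1 / √(exp 1)) = -(1 / 2) := by
    rw [one_div, log_inv, log_sqrt (exp_pos 1).le, log_exp]
  refine ⟨hmain, fun h => ?_, fun h => ?_⟩
  · have hlt := log_lt_log (by positivity) h
    rw [hcrit] at hlt
    exact (tendsto_exp_atBot.comp
      (tendsto_natCast_atTop_atTop.atTop_mul_neg (by linarith) hmain)).congr' hexp
  · have hlt := log_lt_log hρ h
    rw [hcrit] at hlt
    exact (tendsto_exp_atTop.comp
      (tendsto_natCast_atTop_atTop.atTop_mul_pos (by linarith) hmain)).congr' hexp
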